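/- arXiv:1501.02212 — 7 statements merged into one kernel-verified Lean document; each statement's English description precedes it below -/
import Mathlib

section
/- Let X, Y be natural numbers with Y ≥ 1 and let n = size(Y). Then the n-fold iterate of the Loop-I step h applied to the pair (2X+1, Y) equals (E(X,Y), 0); that is, h^[n](2X+1, Y) = (4^n·(2X+1) + Σ_{i<n} 2·4^{n-1-i}·bit_i(Y), 0). -/
/-- The i-th binary digit of `Y` (least significant has index 0). -/
def bit (Y i : ℕ) : ℕ := Y / 2 ^ i % 2

/-- The Loop-I encoding `E(X,Y)`. -/
def E (X Y : ℕ) : ℕ :=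
  4 ^ Nat.size Y * (2 * X + 1) +
    ∑ i ∈ Finset.range (Nat.size Y), 2 * 4 ^ (Nat.size Y - 1 - i) * bit Y i

/-- The Loop-I step. -/
def h : ℕ × ℕ → ℕ × ℕ := fun p => (4 * p.1 + 2 * (p.2 % 2), p.2 / 2)

/-! On the second counter the step is `y ↦ y / 2`, so its `i`-th iterate exposes the digit `bit Y i`
and `n = Nat.size Y` steps exhaust it, since `Y < 2 ^ n`. On the first counter it is a step of
Horner's rule in base `4` with incoming digit `2 * (y % 2)`; Horner's rule weights the first digit
read most heavily, which is why the bits of `Y` come out in reverse order. -/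

open Finset

section Horner

variable {R α : Type*} [Semiring R]

theorem sum_range_succ_pow_sub_mul (b : R) (f : ℕ → R) (m : ℕ) :
    ∑ i ∈ range (m + 1), b ^ (m - i) * f i =
      b * ∑ i ∈ range m, b ^ (m - 1 - i) * f i + f m := by
  rw [sum_range_succ, mul_sum, Nat.sub_self, pow_zero, one_mul]
  congr 1
  refine sum_congr rfl fun i hi => ?_
  have exponent_succ : m - i = m - 1 - i + 1 := by
    have : i < m := mem_range.mp hi
    omega
  rw [exponent_succ, pow_succ', mul_assoc]

theorem mul_add_prodMk_iterate (b : R) (g : α → R) (s : α → α) (a : R) (y : α) (m : ℕ) :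
    (fun p : R × α => (b * p.1 + g p.2, s p.2))^[m] (a, y) =
      (b ^ m * a + ∑ i ∈ range m, b ^ (m - 1 - i) * g (s^[i] y), s^[m] y) := by
  induction m with
  | zero => simp
  | succ m ih =>
    rw [Function.iterate_succ_apply', ih, Nat.add_sub_cancel, sum_range_succ_pow_sub_mul,
      Function.iterate_succ_apply', mul_add, pow_succ', mul_assoc, add_assoc]

end Horner

theorem nat_div_right_iterate (k m : ℕ) : (· / k)^[m] = (· / k ^ m) := by
  induction m with
  | zero => ext y; simp
  | succ m ih =>
    ext y
    rw [Function.iterate_succ_apply', ih, Nat.div_div_eq_div_mul, pow_succ]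

theorem h_iterate (a Y m : ℕ) :
    h^[m] (a, Y) =
      (4 ^ m * a + ∑ i ∈ range m, 2 * 4 ^ (m - 1 - i) * bit Y i, Y / 2 ^ m) := by
  have horner : h^[m] (a, Y) =
      (4 ^ m * a + ∑ i ∈ range m, 4 ^ (m - 1 - i) * (2 * ((· / 2)^[i] Y % 2)),
        (· / 2)^[m] Y) :=
    mul_add_prodMk_iterate 4 (fun y => 2 * (y % 2)) (· / 2) a Y m
  simp only [horner, nat_div_right_iterate, bit, mul_left_comm _ 2, mul_assoc]

theorem loopI_correct (X Y : ℕ) (hY : 1 ≤ Y) :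
    h^[Nat.size Y] (2 * X + 1, Y) = (E X Y, 0) := by
  rw [h_iterate, Nat.div_eq_of_lt (Nat.lt_size_self Y), E]
end

section
/- Let X, Y be natural numbers with Y ≥ 1. Then E(X,Y) ≡ 2 (mod 4); in particular E(X,Y) is even and E(X,Y)+1 is odd. -/
theorem bit_size_sub_one {Y : ℕ} (hY : 0 < Y) : bit Y (Nat.size Y - 1) = 1 := by
  have size_pos : 0 < Nat.size Y := Nat.size_pos.2 hY
  have lower : 2 ^ (Nat.size Y - 1) ≤ Y := Nat.lt_size.1 (Nat.sub_one_lt_of_lt size_pos)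
  have upper : Y < 2 ^ (Nat.size Y - 1 + 1) := by
    simpa only [Nat.sub_add_cancel size_pos] using Nat.lt_size_self Y
  rw [bit, ← Nat.toNat_testBit, Nat.testBit_of_two_pow_le_and_two_pow_add_one_gt lower upper,
    Bool.toNat_true]

theorem sum_range_succ_mul_pow_sub_modEq (b n : ℕ) (a : ℕ → ℕ) :
    ∑ i ∈ Finset.range (n + 1), a i * b ^ (n - i) ≡ a n [MOD b] := by
  have leading_terms : ∀ i ∈ Finset.range (n + 1), i ≠ n → a i * b ^ (n - i) ≡ 0 [MOD b] := by
    intro i hi hin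
    have exponent_ne_zero : n - i ≠ 0 := by
      have := Finset.mem_range.1 hi
      lia
    exact Nat.modEq_zero_iff_dvd.2 ((dvd_pow_self b exponent_ne_zero).mul_left (a i))
  simpa only [Nat.sub_self, pow_zero, mul_one] using
    Nat.sum_modEq_single (fun hn => absurd (Finset.self_mem_range_succ n) hn) leading_terms

theorem E_modEq_two_mul_bit_size_sub_one (X : ℕ) {Y : ℕ} (hY : 0 < Y) :
    E X Y ≡ 2 * bit Y (Nat.size Y - 1) [MOD 4] := by
  obtain ⟨n, size_eq⟩ : ∃ n, Nat.size Y = n + 1 :=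
    Nat.exists_eq_add_one.2 (Nat.size_pos.2 hY)
  have prefix_modEq : 4 ^ (n + 1) * (2 * X + 1) ≡ 0 [MOD 4] :=
    Nat.modEq_zero_iff_dvd.2 ((dvd_pow_self 4 n.succ_ne_zero).mul_right _)
  have groups_modEq : ∑ i ∈ Finset.range (n + 1), 2 * bit Y i * 4 ^ (n - i) ≡
      2 * bit Y n [MOD 4] :=
    sum_range_succ_mul_pow_sub_modEq 4 n fun i => 2 * bit Y i
  simpa only [E, size_eq, Nat.add_sub_cancel, zero_add, mul_right_comm 2 _ (bit Y _)]
    using prefix_modEq.add groups_modEq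

theorem E_mod_four (X Y : ℕ) (hY : 1 ≤ Y) :
    E X Y % 4 = 2 ∧ Even (E X Y) ∧ Odd (E X Y + 1) := by
  have mod_four : E X Y % 4 = 2 := by
    have lowest_group := E_modEq_two_mul_bit_size_sub_one X hY
    rwa [bit_size_sub_one hY] at lowest_group
  have even : Even (E X Y) := Nat.even_iff.2 (by lia)
  exact ⟨mod_four, even, even.add_one⟩
end

section
/- Let X, Y be natural numbers with Y ≥ 1 and n = size(Y). Then for every i < n the floor quotient E(X,Y) / 4^i is even, and E(X,Y) / 4^n = 2X + 1. (Hence the loop 'while even(B) do B := B div 4' started from B = E(X,Y) executes exactly n iterations and terminates with B = 2X+1.) -/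
/-!
Written in base 4, `E X Y` is `2 * X + 1` followed by the digits `2 * bit Y 0`, `2 * bit Y 1`, ….
Each division by 4 deletes the last digit, so a quotient ends in one of these even digits until all
of them have been deleted and `2 * X + 1` is left.
-/

/-- The number obtained from `a` by appending, in base `b`, the digits `d 0`, …, `d (n - 1)` on the
right, computed by Horner's rule. It models the counter after `n` rounds of Loop I; the digits
`d i` are not required to be less than `b`. -/
def appendDigits (b a : ℕ) (d : ℕ → ℕ) : ℕ → ℕ
  | 0 => a
  | n + 1 => b * appendDigits b a d n + d n

theorem appendDigits_eq_add_sum (b a : ℕ) (d : ℕ → ℕ) (n : ℕ) :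
    appendDigits b a d n = b ^ n * a + ∑ i ∈ Finset.range n, b ^ (n - 1 - i) * d i := by
  induction n with
  | zero => simp [appendDigits]
  | succ n ih =>
    have sum_shift : ∑ i ∈ Finset.range n, b ^ (n - i) * d i =
        b * ∑ i ∈ Finset.range n, b ^ (n - 1 - i) * d i := by
      rw [Finset.mul_sum]
      refine Finset.sum_congr rfl fun i hi => ?_
      have hin : i < n := Finset.mem_range.mp hi
      rw [← mul_assoc, ← pow_succ', show n - 1 - i + 1 = n - i by omega]
    calc appendDigits b a d (n + 1)
      _ = b * (b ^ n * a + ∑ i ∈ Finset.range n, b ^ (n - 1 - i) * d i) + d n := by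
        rw [appendDigits, ih]
      _ = b ^ (n + 1) * a + (∑ i ∈ Finset.range n, b ^ (n - i) * d i + d n) := by
        rw [sum_shift]; ring
      _ = b ^ (n + 1) * a + ∑ i ∈ Finset.range (n + 1), b ^ (n + 1 - 1 - i) * d i := by
        simp [Finset.sum_range_succ]

section appendDigits

variable {b a : ℕ} {d : ℕ → ℕ}

theorem appendDigits_succ_div {n : ℕ} (hd : d n < b) :
    appendDigits b a d (n + 1) / b = appendDigits b a d n := by
  rw [appendDigits, Nat.mul_add_div (Nat.zero_lt_of_lt hd), Nat.div_eq_of_lt hd, add_zero]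

theorem appendDigits_add_div_pow (hd : ∀ i, d i < b) (m k : ℕ) :
    appendDigits b a d (m + k) / b ^ k = appendDigits b a d m := by
  induction k with
  | zero => simp
  | succ k ih =>
    rw [pow_succ', ← Nat.div_div_eq_div_mul, ← add_assoc, appendDigits_succ_div (hd _), ih]

theorem even_appendDigits_succ {n : ℕ} (hb : Even b) (hd : Even (d n)) :
    Even (appendDigits b a d (n + 1)) :=
  (hb.mul_right _).add hd

end appendDigits

theorem bit_lt_two (Y i : ℕ) : bit Y i < 2 :=
  Nat.mod_lt _ two_pos

theorem E_eq_appendDigits (X Y : ℕ) :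
    E X Y = appendDigits 4 (2 * X + 1) (fun i => 2 * bit Y i) (Nat.size Y) := by
  simp only [E, appendDigits_eq_add_sum, mul_left_comm, mul_assoc]

theorem loopII_correct (X Y : ℕ) (hY : 1 ≤ Y) :
    (∀ i < Nat.size Y, Even (E X Y / 4 ^ i)) ∧
      E X Y / 4 ^ Nat.size Y = 2 * X + 1 := by
  have digit_lt (i : ℕ) : 2 * bit Y i < 4 := by linarith [bit_lt_two Y i]
  rw [E_eq_appendDigits]
  constructor
  · intro i hi
    obtain ⟨m, hm⟩ : ∃ m, Nat.size Y = m + 1 + i := ⟨Nat.size Y - i - 1, by omega⟩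
    rw [hm, appendDigits_add_div_pow digit_lt]
    exact even_appendDigits_succ (by decide) (even_two_mul _)
  · simpa only [zero_add, appendDigits] using
      appendDigits_add_div_pow (a := 2 * X + 1) digit_lt 0 (Nat.size Y)
end

section
/- Let X, Y be natural numbers with Y ≥ 1 and n = size(Y). Then for every t ≤ n, the t-fold iterate of the Loop-IV step g satisfies g^[t](E(X,Y), 2^{3n+1}·X) = ( 4^{n-t}·(2X+1) + Σ_{i<n-t} 2·4^{n-t-1-i}·bit_i(Y) + Σ_{s<t} bit_{n-1-s}(Y)·2^{3n-s-2t}·X , 2^{3(n-t)+1}·X ). -/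
/-- The Loop-IV step. -/
def g : ℕ × ℕ → ℕ × ℕ := fun p =>
  let a' := p.1 / 2
  let a'' := if Odd a' then a' + p.2 / 4 else a'
  (a'' / 2, p.2 / 8)

/-
When `m` digits remain, the accumulator is `2 * 8 ^ m * X * q`, where `q` is the number spelled by
the digits already decoded, most significant first. A step divides the first counter by `4` and the
second by `8`, and adds `2 * 8 ^ m * X` exactly when the decoded digit is `1`. Since `8 / 4 = 2`,
this replaces `q` by `2 * q + bit Y m`, as in the Horner scheme.
-/

/-- The base-4 word in which Loop I stores the binary digits `b 0, …, b (m - 1)`, each of them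
doubled. The order is reversed: `b (m - 1)`, the first digit to be decoded, is in the units
place. -/
def digitCode (b : ℕ → ℕ) (m : ℕ) : ℕ :=
  ∑ i ∈ Finset.range m, 2 * 4 ^ (m - 1 - i) * b i

theorem digitCode_succ (b : ℕ → ℕ) (m : ℕ) :
    digitCode b (m + 1) = 4 * digitCode b m + 2 * b m := by
  have hshift : ∀ i ∈ Finset.range m,
      2 * 4 ^ (m + 1 - 1 - i) * b i = 4 * (2 * 4 ^ (m - 1 - i) * b i) := by
    intro i hi
    have him : i < m := Finset.mem_range.mp hi
    have hexp : m + 1 - 1 - i = (m - 1 - i) + 1 := by omega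
    rw [hexp, pow_succ]
    ring
  rw [digitCode, Finset.sum_range_succ, Finset.sum_congr rfl hshift, ← Finset.mul_sum, ← digitCode]
  simp

/-- The number with binary digits `b m, …, b (m + t - 1)`, least significant first. For `m + t = n`
these are the `t` digits that have been decoded after `t` steps. -/
def digitBlock (b : ℕ → ℕ) (m t : ℕ) : ℕ :=
  ∑ j ∈ Finset.range t, 2 ^ j * b (m + j)

theorem digitBlock_succ (b : ℕ → ℕ) (m t : ℕ) :
    digitBlock b m (t + 1) = 2 * digitBlock b (m + 1) t + b m := by
  rw [digitBlock, digitBlock, Finset.sum_range_succ', Finset.mul_sum]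
  simp only [pow_succ', pow_zero, one_mul, add_zero, mul_assoc, add_assoc, add_comm 1]

theorem sum_mul_two_pow_eq_mul_digitBlock (b : ℕ → ℕ) (X m t : ℕ) :
    ∑ s ∈ Finset.range t, b (m + t - 1 - s) * 2 ^ (3 * (m + t) - s - 2 * t) * X =
      2 ^ (3 * m + 1) * X * digitBlock b m t := by
  rw [digitBlock, ← Finset.sum_range_reflect, Finset.mul_sum]
  refine Finset.sum_congr rfl fun j hj => ?_
  have hjt : j < t := Finset.mem_range.mp hj
  have hindex : m + t - 1 - (t - 1 - j) = m + j := by omega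
  have hexp : 3 * (m + t) - (t - 1 - j) - 2 * t = (3 * m + 1) + j := by omega
  rw [hindex, hexp, pow_add]
  ring

/-- The two counters of Loop IV when the digits `b 0, …, b (m - 1)` remain to be decoded and those
already decoded spell the number `q`. The coefficient `C` sits above the stored word; in the
encoding `E X Y` it is `2 * X + 1`. -/
def loopIVState (b : ℕ → ℕ) (C X m q : ℕ) : ℕ × ℕ :=
  (4 ^ m * C + digitCode b m + 2 ^ (3 * m + 1) * X * q, 2 ^ (3 * m + 1) * X)

theorem g_four_mul_add_two_mul {c : ℕ} (hc : c < 2) (A D : ℕ) :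
    g (4 * A + 2 * c, 8 * D) = (A + c * D, D) := by
  have hhalf : (4 * A + 2 * c) / 2 = 2 * A + c := by omega
  have hodd : Odd (2 * A + c) ↔ c = 1 := by rw [Nat.odd_iff]; omega
  simp only [g, hhalf, hodd, Prod.mk.injEq]
  obtain rfl | rfl : c = 0 ∨ c = 1 := by omega
  · rw [if_neg zero_ne_one]
    omega
  · rw [if_pos rfl]
    omega

theorem g_loopIVState_succ {b : ℕ → ℕ} {m : ℕ} (hb : b m < 2) (C X q : ℕ) :
    g (loopIVState b C X (m + 1) q) = loopIVState b C X m (2 * q + b m) := by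
  set D := 2 ^ (3 * m + 1) * X with hD
  have hscale : 2 ^ (3 * (m + 1) + 1) * X = 8 * D := by rw [hD]; ring
  have hcounter : 4 ^ (m + 1) * C + digitCode b (m + 1) + 8 * D * q =
      4 * (4 ^ m * C + digitCode b m + 2 * D * q) + 2 * b m := by
    rw [digitCode_succ]; ring
  rw [loopIVState, loopIVState, hscale, hcounter, g_four_mul_add_two_mul hb, ← hD]
  congr 1
  ring

theorem iterate_g_loopIVState {b : ℕ → ℕ} (hb : ∀ i, b i < 2) (C X m t : ℕ) :
    g^[t] (loopIVState b C X (m + t) 0) = loopIVState b C X m (digitBlock b m t) := by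
  induction t generalizing m with
  | zero => rfl
  | succ t ih =>
    rw [Function.iterate_succ_apply', ← Nat.succ_add_eq_add_succ, ih, g_loopIVState_succ (hb m),
      digitBlock_succ]

theorem loopIV_invariant_general {b : ℕ → ℕ} (hb : ∀ i, b i < 2) (C X : ℕ) {n t : ℕ}
    (ht : t ≤ n) :
    g^[t] (4 ^ n * C + ∑ i ∈ Finset.range n, 2 * 4 ^ (n - 1 - i) * b i, 2 ^ (3 * n + 1) * X) =
      (4 ^ (n - t) * C + (∑ i ∈ Finset.range (n - t), 2 * 4 ^ (n - t - 1 - i) * b i) +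
        ∑ s ∈ Finset.range t, b (n - 1 - s) * 2 ^ (3 * n - s - 2 * t) * X,
       2 ^ (3 * (n - t) + 1) * X) := by
  obtain ⟨m, rfl⟩ := Nat.exists_eq_add_of_le' ht
  rw [Nat.add_sub_cancel, sum_mul_two_pow_eq_mul_digitBlock]
  simpa only [loopIVState, digitCode, mul_zero, add_zero] using iterate_g_loopIVState hb C X m t

theorem loopIV_invariant (X Y : ℕ) (hY : 1 ≤ Y) (t : ℕ) (ht : t ≤ Nat.size Y) :
    g^[t] (E X Y, 2 ^ (3 * Nat.size Y + 1) * X) =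
      (4 ^ (Nat.size Y - t) * (2 * X + 1) +
        (∑ i ∈ Finset.range (Nat.size Y - t),
          2 * 4 ^ (Nat.size Y - t - 1 - i) * bit Y i) +
        ∑ s ∈ Finset.range t,
          bit Y (Nat.size Y - 1 - s) * 2 ^ (3 * Nat.size Y - s - 2 * t) * X,
       2 ^ (3 * (Nat.size Y - t) + 1) * X) :=
  loopIV_invariant_general (fun _ => Nat.mod_lt _ two_pos) (2 * X + 1) X ht
end

section
/- Let X, Y be natural numbers with Y ≥ 1 and n = size(Y). For every t < n the first component of g^[t](E(X,Y), 2^{3n+1}·X) is even, and the first component of g^[n](E(X,Y), 2^{3n+1}·X) is odd. (Hence the loop 'while even(A)' of Loop IV executes exactly n iterations.) -/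
/-!
The low base-4 digits of `A` hold the binary digits of `Y`, doubled and in reverse order. One step
reads the last of them, `2 * b`, moves `A` one base-4 place to the right and adds `b * (B / 8)`.
When this leaves `m` digits to be read, `B / 8 = 2 ^ (3 * m + 1) * X` is a multiple of `2 * 4 ^ m`,
so the addend changes only the odd number above those digits, and keeps it odd. Hence `A` is even
as long as a digit is left, and is that odd number itself when none is.
-/

/-- The first `m` binary digits of `Y`, doubled and read as base-4 digits in reverse order, so that
digit `0` of `Y` becomes the most significant one. -/
def reversedDigits (Y m : ℕ) : ℕ :=
  ∑ i ∈ Finset.range m, 2 * 4 ^ (m - 1 - i) * bit Y i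

/-- The pair `(A, B)` of Loop IV when `m` digits of `Y` are still to be read and `k` is the value
accumulated so far. -/
def loopState (X Y m k : ℕ) : ℕ × ℕ :=
  (4 ^ m * (2 * k + 1) + reversedDigits Y m, 2 ^ (3 * m + 1) * X)

theorem bit_le_one (Y i : ℕ) : bit Y i ≤ 1 :=
  Nat.le_of_lt_succ (Nat.mod_lt _ two_pos)

theorem reversedDigits_zero (Y : ℕ) : reversedDigits Y 0 = 0 :=
  Finset.sum_range_zero _

theorem reversedDigits_succ (Y m : ℕ) :
    reversedDigits Y (m + 1) = 4 * reversedDigits Y m + 2 * bit Y m := by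
  have shift : ∀ i ∈ Finset.range m,
      2 * 4 ^ (m + 1 - 1 - i) * bit Y i = 4 * (2 * 4 ^ (m - 1 - i) * bit Y i) := by
    intro i hi
    have exponent : m + 1 - 1 - i = m - 1 - i + 1 := by
      have := Finset.mem_range.mp hi
      omega
    rw [exponent, pow_succ]
    ring
  rw [reversedDigits, Finset.sum_range_succ, Finset.sum_congr rfl shift, ← Finset.mul_sum,
    ← reversedDigits]
  simp

theorem g_four_mul_add_two_mul_s4 (u v : ℕ) {b : ℕ} (hb : b ≤ 1) :
    g (4 * u + 2 * b, 8 * v) = (u + b * v, v) := by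
  have half : (4 * u + 2 * b) / 2 = 2 * u + b := by omega
  have quarter : 8 * v / 4 = 2 * v := by omega
  simp only [g, half, quarter, Nat.odd_iff, Prod.mk.injEq]
  interval_cases b <;> split_ifs <;> omega

theorem g_loopState_succ (X Y m k : ℕ) :
    g (loopState X Y (m + 1) k) = loopState X Y m (k + X * (2 ^ m * bit Y m)) := by
  have fst_eq : 4 ^ (m + 1) * (2 * k + 1) + reversedDigits Y (m + 1) =
      4 * (4 ^ m * (2 * k + 1) + reversedDigits Y m) + 2 * bit Y m := by
    rw [reversedDigits_succ]
    ring
  have snd_eq : 2 ^ (3 * (m + 1) + 1) * X = 8 * (2 ^ (3 * m + 1) * X) := by ring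
  have addend_eq : 2 ^ (3 * m + 1) * X = 4 ^ m * (2 * (X * 2 ^ m)) := by
    rw [pow_succ, pow_mul, show 2 ^ 3 = 4 * 2 by rfl, mul_pow]
    ring
  rw [loopState, fst_eq, snd_eq, g_four_mul_add_two_mul_s4 _ _ (bit_le_one Y m), loopState,
    Prod.mk.injEq]
  refine ⟨?_, rfl⟩
  rw [addend_eq]
  ring

theorem iterate_g_loopState_add (X Y m t k : ℕ) :
    g^[t] (loopState X Y (m + t) k) =
      loopState X Y m (k + X * ∑ i ∈ Finset.Ico m (m + t), 2 ^ i * bit Y i) := by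
  induction t generalizing k with
  | zero => simp
  | succ t ih =>
    rw [Function.iterate_succ_apply, ← add_assoc, g_loopState_succ, ih,
      Finset.sum_Ico_succ_top (Nat.le_add_right m t), add_assoc k, ← mul_add,
      add_comm (2 ^ (m + t) * _)]

theorem even_loopState_succ_fst (X Y m k : ℕ) : Even (loopState X Y (m + 1) k).1 := by
  simp [loopState, reversedDigits_succ, Nat.even_add, Nat.even_pow, parity_simps]

theorem odd_loopState_zero_fst (X Y k : ℕ) : Odd (loopState X Y 0 k).1 :=
  ⟨k, by simp only [loopState, reversedDigits_zero, pow_zero, one_mul, add_zero]⟩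

theorem loopIV_iterations (X Y : ℕ) (hY : 1 ≤ Y) :
    (∀ t < Nat.size Y,
      Even (g^[t] (E X Y, 2 ^ (3 * Nat.size Y + 1) * X)).1) ∧
    Odd (g^[Nat.size Y] (E X Y, 2 ^ (3 * Nat.size Y + 1) * X)).1 := by
  have initial : (E X Y, 2 ^ (3 * Nat.size Y + 1) * X) = loopState X Y (Nat.size Y) X := rfl
  rw [initial]
  constructor
  · intro t ht
    obtain ⟨m, hm⟩ : ∃ m, Nat.size Y = m + 1 + t := ⟨Nat.size Y - t - 1, by omega⟩
    rw [hm, iterate_g_loopState_add]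
    exact even_loopState_succ_fst ..
  · have final := iterate_g_loopState_add X Y 0 (Nat.size Y) X
    rw [zero_add] at final
    rw [final]
    exact odd_loopState_zero_fst ..
end

section
/- Let X, Y be natural numbers with Y ≥ 1 and n = size(Y). Let e be the first component of h^[n](2X+1, Y), and let (a, b) = g^[n](e, 2^{3n+1}·X). Then (a − b) / 2 = X·Y, where subtraction is truncated natural-number subtraction and division is floor division. (This is the arithmetic correctness of the whole three-counter multiplication algorithm: after the final adjustments 'A := A − B; B := A; B := B div 2' the output counter holds X·Y.) -/
/-!
Loop I pushes the binary digits of `Y` onto the accumulator, and each step of Loop IV pops the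
digit `c` pushed last, leaving behind `c * m`, where `m` is the new value of the second counter.
The popped contribution does not disturb the digits still on the stack: with `k` of them left,
`m` is a multiple of `8 ^ k = 4 ^ k * 2 ^ k`, and adding `4 ^ k * z` to the accumulator amounts to
having started Loop I from an accumulator larger by `z`. The surplus factor `2 ^ k` is the place
value of `c` in `Y`.
-/

theorem iterate_h_snd (n a b : ℕ) : (h^[n] (a, b)).2 = b / 2 ^ n := by
  induction n with
  | zero => simp
  | succ n ih =>
    calc (h^[n + 1] (a, b)).2 = (h^[n] (a, b)).2 / 2 := by rw [Function.iterate_succ_apply', h]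
      _ = b / 2 ^ (n + 1) := by rw [ih, Nat.div_div_eq_div_mul, pow_succ]

theorem iterate_h_add_fst (n a b z : ℕ) :
    (h^[n] (a + z, b)).1 = (h^[n] (a, b)).1 + 4 ^ n * z := by
  induction n generalizing a b z with
  | zero => simp
  | succ n ih =>
    calc (h^[n + 1] (a + z, b)).1 = (h^[n] (4 * a + 2 * (b % 2) + 4 * z, b / 2)).1 := by
          rw [Function.iterate_succ_apply, h]; congr 3; ring
      _ = (h^[n + 1] (a, b)).1 + 4 ^ (n + 1) * z := by
          rw [ih, Function.iterate_succ_apply, h]; ring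

theorem g_h_fst (p : ℕ × ℕ) (m : ℕ) : g ((h p).1, 8 * m) = (p.1 + p.2 % 2 * m, m) := by
  have half : (4 * p.1 + 2 * (p.2 % 2)) / 2 = 2 * p.1 + p.2 % 2 := by omega
  have quarter : 8 * m / 4 = 2 * m := by omega
  have eighth : 8 * m / 8 = m := by omega
  simp only [g, h, half, quarter, eighth, Nat.odd_iff, Nat.mul_add_mod, Nat.mod_mod]
  rcases Nat.mod_two_eq_zero_or_one p.2 with digit | digit <;>
    simp only [digit, reduceIte, zero_ne_one, Prod.mk.injEq, and_true] <;> omega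

theorem iterate_g_iterate_h_fst (n a b m : ℕ) :
    g^[n] ((h^[n] (a, b)).1, 8 ^ n * m) = (a + b % 2 ^ n * m, m) := by
  induction n generalizing a with
  | zero => simp [Nat.mod_one]
  | succ n ih =>
    set c := b / 2 ^ n % 2 with hc
    have pop : g ((h^[n + 1] (a, b)).1, 8 ^ (n + 1) * m) =
        ((h^[n] (a, b)).1 + c * (8 ^ n * m), 8 ^ n * m) := by
      rw [Function.iterate_succ_apply', pow_succ', mul_assoc, g_h_fst, iterate_h_snd]
    have absorb : (h^[n] (a, b)).1 + c * (8 ^ n * m) = (h^[n] (a + 2 ^ n * c * m, b)).1 := by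
      rw [iterate_h_add_fst, show 8 = 4 * 2 from rfl, mul_pow]
      ring
    rw [Function.iterate_succ_apply, pop, absorb, ih, Nat.mod_pow_succ, ← hc]
    congr 1
    ring

theorem mult_correct (X Y : ℕ) (hY : 1 ≤ Y) :
    ((g^[Nat.size Y] ((h^[Nat.size Y] (2 * X + 1, Y)).1,
        2 ^ (3 * Nat.size Y + 1) * X)).1 -
      (g^[Nat.size Y] ((h^[Nat.size Y] (2 * X + 1, Y)).1,
        2 ^ (3 * Nat.size Y + 1) * X)).2) / 2 = X * Y := by
  have counter : 2 ^ (3 * Nat.size Y + 1) * X = 8 ^ Nat.size Y * (2 * X) := by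
    rw [pow_succ, pow_mul, mul_assoc]
    norm_num
  rw [counter, iterate_g_iterate_h_fst, Nat.mod_eq_of_lt (Nat.lt_size_self Y)]
  have difference : 2 * X + 1 + Y * (2 * X) - 2 * X = 2 * (X * Y) + 1 := by
    rw [add_assoc, Nat.add_sub_cancel_left]
    ring
  rw [difference]
  omega
end

section
/- Let X, Y be natural numbers with Y ≥ 1 and n = size(Y). Then 2^n · (E(X,Y) + 1) ≤ 24 · (X + 1) · Y^3. (Thus the maximum value handled by the three-counter multiplication algorithm is of order X·Y^3, so the algorithm runs in time polynomial in the input values.) -/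
/-!
The binary digits of `Y`, doubled and read in reverse order, are the base-4 digits of the sum in
`E X Y`, so with `n = Nat.size Y` that sum is less than `4 ^ n`. Hence
`E X Y + 1 ≤ 4 ^ n * (2 * X + 2)`, and the quantity to bound is at most
`(2 ^ n) ^ 3 * (2 * X + 2)`, where `2 ^ n ≤ 2 * Y`.
-/

theorem sum_pow_sub_mul_lt_pow {b : ℕ} (n : ℕ) {d : ℕ → ℕ} (hd : ∀ i < n, d i < b) :
    ∑ i ∈ Finset.range n, b ^ (n - 1 - i) * d i < b ^ n := by
  induction n generalizing d with
  | zero => simp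
  | succ n ih =>
    have tail_lt : ∑ i ∈ Finset.range n, b ^ (n - 1 - i) * d (i + 1) < b ^ n :=
      ih fun i hi ↦ hd (i + 1) (by lia)
    calc ∑ i ∈ Finset.range (n + 1), b ^ (n + 1 - 1 - i) * d i
        = ∑ i ∈ Finset.range n, b ^ (n - 1 - i) * d (i + 1) + b ^ n * d 0 := by
          simp only [Finset.sum_range_succ', Nat.add_sub_cancel, Nat.sub_zero, Nat.sub_sub,
            Nat.add_comm 1]
      _ < b ^ n + b ^ n * d 0 := by gcongr
      _ = b ^ n * (d 0 + 1) := by ring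
      _ ≤ b ^ n * b := by gcongr; exact hd 0 n.succ_pos
      _ = b ^ (n + 1) := (pow_succ b n).symm

theorem E_lt (X Y : ℕ) : E X Y < 4 ^ Nat.size Y * (2 * X + 2) := by
  have digit_lt (i : ℕ) : 2 * bit Y i < 4 := by
    have := bit_lt_two Y i
    lia
  calc E X Y
      = 4 ^ Nat.size Y * (2 * X + 1) +
          ∑ i ∈ Finset.range (Nat.size Y), 4 ^ (Nat.size Y - 1 - i) * (2 * bit Y i) := by
        simp only [E, mul_left_comm, mul_assoc]
    _ < 4 ^ Nat.size Y * (2 * X + 1) + 4 ^ Nat.size Y := by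
        gcongr
        exact sum_pow_sub_mul_lt_pow _ fun i _ ↦ digit_lt i
    _ = 4 ^ Nat.size Y * (2 * X + 2) := by ring

theorem two_pow_size_le_two_mul {m : ℕ} (hm : 0 < m) : 2 ^ Nat.size m ≤ 2 * m := by
  have size_pos : 0 < Nat.size m := Nat.size_pos.mpr hm
  calc 2 ^ Nat.size m = 2 * 2 ^ (Nat.size m - 1) := (mul_pow_sub_one size_pos.ne' 2).symm
    _ ≤ 2 * m := by gcongr; exact Nat.lt_size.mp (Nat.sub_one_lt_of_lt size_pos)

theorem max_value_bound (X Y : ℕ) (hY : 1 ≤ Y) :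
    2 ^ Nat.size Y * (E X Y + 1) ≤ 24 * (X + 1) * Y ^ 3 := by
  calc 2 ^ Nat.size Y * (E X Y + 1)
      ≤ 2 ^ Nat.size Y * (4 ^ Nat.size Y * (2 * X + 2)) := by gcongr; exact E_lt X Y
    _ = (2 ^ Nat.size Y) ^ 3 * (2 * X + 2) := by
        rw [show (4 : ℕ) = 2 ^ 2 by rfl, pow_right_comm]
        ring
    _ ≤ (2 * Y) ^ 3 * (2 * X + 2) := by gcongr; exact two_pow_size_le_two_mul hY
    _ = 16 * (X + 1) * Y ^ 3 := by ring
    _ ≤ 24 * (X + 1) * Y ^ 3 := by gcongr; norm_num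
end
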